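/- Let η ∈ (0,1), X = {f ∈ L^3_{∞,∞} : M_2(f)^{1−η} · M_3(f)^η ≤ 1}, and δ > 0. Then ω(D^1, X; δ) = sup{ α·(ab + b²/2) : α, b > 0, a ≥ 0, α·(a²b/2 + ab² + b³/3) = δ, α·b^{1−η} = 1 }, and this supremum is attained. -/

import Mathlib

open MeasureTheory Filter

noncomputable section

/-- The uniform norm `‖f‖ = sup_{t ∈ ℝ} |f t|` of a function `f : ℝ → ℝ`. -/
def unif (f : ℝ → ℝ) : ℝ := ⨆ t : ℝ, |f t|

/-- `M k f = ‖f⁽ᵏ⁾‖`, the uniform norm of the `k`-th derivative of `f`. -/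
def M (k : ℕ) (f : ℝ → ℝ) : ℝ := unif (iteratedDeriv k f)

/-- The class `L^r_{∞,∞}`: bounded functions `f : ℝ → ℝ` having `r-1` (continuous)
derivatives, with `f⁽ʳ⁻¹⁾` locally absolutely continuous and `f⁽ʳ⁾` essentially bounded;
the last two conditions are equivalent to `f⁽ʳ⁻¹⁾` being Lipschitz. -/
def MemL (r : ℕ) (f : ℝ → ℝ) : Prop :=
  Continuous f ∧ (∃ C : ℝ, ∀ t : ℝ, |f t| ≤ C) ∧ ContDiff ℝ (r - 1 : ℕ) f ∧
    ∃ K : NNReal, LipschitzWith K (iteratedDeriv (r - 1) f)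

/-- The Euler perfect spline `φ_r`: the `r`-th `2π`-periodic antiderivative with zero
mean value of `t ↦ sgn (sin t)`. -/
def eulerPhi : ℕ → ℝ → ℝ
  | 0 => fun t => Real.sign (Real.sin t)
  | (s + 1) => fun t =>
      (∫ x in (0:ℝ)..t, eulerPhi s x) -
        (1 / (2 * Real.pi)) * ∫ x in (0:ℝ)..(2 * Real.pi), ∫ u in (0:ℝ)..x, eulerPhi s u

/-- `φ_{λ,r}(t) = λ^{-r} φ_r (λ t)`. -/
def eulerPhiL (lam : ℝ) (r : ℕ) (t : ℝ) : ℝ := lam ^ (-(r : ℤ)) * eulerPhi r (lam * t)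

/-- The basic step function: `0` on `[0,a]`, `1` on `(a, a+b]`, `0` after `a+b`. -/
def psiBase (a b : ℝ) (t : ℝ) : ℝ := if t ≤ a then 0 else if t ≤ a + b then 1 else 0

/-- `psiBase` continued evenly with respect to the point `a+b+c`. -/
def psiHalf (a b c t : ℝ) : ℝ :=
  if t ≤ a + b + c then psiBase a b t else psiBase a b (2 * (a + b + c) - t)

/-- The Rodov step function `ψ_0(a,b,c)`: equal to `psiBase` on `[0, a+b+c]`, continued
evenly with respect to `a+b+c`, then oddly with respect to `2(a+b+c)`, then
`4(a+b+c)`-periodically. -/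
def psiZero (a b c t : ℝ) : ℝ :=
  if (t - 4 * (a + b + c) * ⌊t / (4 * (a + b + c))⌋) ≤ 2 * (a + b + c) then
    psiHalf a b c (t - 4 * (a + b + c) * ⌊t / (4 * (a + b + c))⌋)
  else
    -psiHalf a b c (4 * (a + b + c) - (t - 4 * (a + b + c) * ⌊t / (4 * (a + b + c))⌋))

/-- `ψ_s(a,b,c)`: the `s`-th periodic antiderivative of `ψ_0(a,b,c)` with zero mean
value over the period `[0, 4(a+b+c)]`. -/
def psi : ℕ → ℝ → ℝ → ℝ → ℝ → ℝ
  | 0 => psiZero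
  | (s + 1) => fun a b c t =>
      (∫ x in (0:ℝ)..t, psi s a b c x) -
        (1 / (4 * (a + b + c))) *
          ∫ x in (0:ℝ)..(4 * (a + b + c)), ∫ u in (0:ℝ)..x, psi s a b c u

/-- The modulus of continuity `ω(D^k, X; δ) = sup {‖f⁽ᵏ⁾‖ : f ∈ X, ‖f‖ ≤ δ}` of the
differentiation operator `D^k` on a class `X`. -/
def omegaMod (k : ℕ) (X : Set (ℝ → ℝ)) (δ : ℝ) : ℝ :=
  sSup {y : ℝ | ∃ f ∈ X, M 0 f ≤ δ ∧ M k f = y}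

end

/-!
For the upper bound, compare the central difference `s ↦ f (x + s) - f (x - s) - 2 s f' x` with its
majorant: if `|f''| ≤ α b` and `f''` is `α`-Lipschitz, then `|f'' (x + s) - f'' (x - s)|` is at most
`2 α min (s, b)`. Integrating twice up to `s = a + b` and using `|f| ≤ δ` gives
`|f' x| ≤ α (a b + b² / 2)` as soon as `δ = α (a² b / 2 + a b² + b³ / 3)`. Take `α = M₃(f)` and `b`
with `α b^(1 - η) = 1`; then membership in the class reads `M₂(f) ≤ α b`. A suitable `a ≥ 0` exists
unless `α` is too small, in which case the Lipschitz bound alone, with `a = 0`, is enough.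

Equality holds for the periodic spline whose second derivative is `-α` times the ramp `min (s, b)`,
continued oddly and then by reflection in `±(a + b)`.

The supremum is attained because the constraints determine `α` and `a` from `b`, which makes the
slope a continuous function of `b` on a compact interval `[0, B]` that vanishes at `b = 0`.
-/

/-! ### Uniform norms of derivatives -/

lemma unif_nonneg (f : ℝ → ℝ) : 0 ≤ unif f :=
  Real.iSup_nonneg fun _ => abs_nonneg _

lemma unif_le {f : ℝ → ℝ} {C : ℝ} (h : ∀ t, |f t| ≤ C) : unif f ≤ C :=
  ciSup_le h

lemma abs_le_unif {f : ℝ → ℝ} {C : ℝ} (h : ∀ t, |f t| ≤ C) (t : ℝ) : |f t| ≤ unif f :=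
  le_ciSup (f := fun t => |f t|) ⟨C, Set.forall_mem_range.2 h⟩ t

lemma unif_deriv_le {f : ℝ → ℝ} {K : ℝ} (hK : 0 ≤ K)
    (hf : ∀ x y, |f x - f y| ≤ K * |x - y|) : unif (deriv f) ≤ K :=
  unif_le fun t =>
    norm_deriv_le_of_lip' (f := f) (x₀ := t) hK (Eventually.of_forall fun x => hf x t)

lemma abs_sub_le_unif_deriv_mul {f : ℝ → ℝ} {K : NNReal} (hf : LipschitzWith K f) (x y : ℝ) :
    |f x - f y| ≤ unif (deriv f) * |x - y| := by
  have hac : AbsolutelyContinuousOnInterval f y x :=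
    (hf.lipschitzOnWith (s := Set.uIcc y x)).absolutelyContinuousOnInterval
  have hderiv (t : ℝ) : ‖deriv f t‖ ≤ unif (deriv f) :=
    abs_le_unif (fun s => norm_deriv_le_of_lipschitz (x₀ := s) hf) t
  rw [← hac.integral_deriv_eq_sub]
  exact intervalIntegral.norm_integral_le_of_norm_le_const fun t _ => hderiv t

lemma exists_abs_iteratedDeriv_le {f : ℝ → ℝ} {C : ℝ} (hC : ∀ t, |f t| ≤ C) (n : ℕ)
    (hf : ContDiff ℝ n f) (t : ℝ) :
    ∃ ξ ∈ Set.Icc t (t + (2 ^ n - 1)), |iteratedDeriv n f ξ| ≤ 2 ^ n * C := by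
  induction n generalizing t with
  | zero => exact ⟨t, by simp, by simpa using hC t⟩
  | succ n ih =>
    have hfn : ContDiff ℝ n f := hf.of_le (by exact_mod_cast n.le_succ)
    have hdiff : Differentiable ℝ (iteratedDeriv n f) :=
      hf.differentiable_iteratedDeriv n (by exact_mod_cast n.lt_succ_self)
    obtain ⟨u, ⟨htu, hut⟩, hu⟩ := ih hfn t
    obtain ⟨v, ⟨htv, hvt⟩, hv⟩ := ih hfn (t + 2 ^ n)
    have huv : 1 ≤ v - u := by linarith
    obtain ⟨ξ, ⟨huξ, hξv⟩, hξ⟩ := exists_deriv_eq_slope (iteratedDeriv n f)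
      (by linarith : u < v) hdiff.continuous.continuousOn hdiff.differentiableOn
    refine ⟨ξ, ⟨by linarith, by rw [pow_succ]; linarith⟩, ?_⟩
    rw [iteratedDeriv_succ, hξ, abs_div]
    calc |iteratedDeriv n f v - iteratedDeriv n f u| / |v - u|
        ≤ |iteratedDeriv n f v - iteratedDeriv n f u| :=
          div_le_self (abs_nonneg _) (huv.trans (le_abs_self _))
      _ ≤ |iteratedDeriv n f v| + |iteratedDeriv n f u| := abs_sub _ _
      _ ≤ 2 ^ (n + 1) * C := by rw [pow_succ]; linarith

lemma M_const_mul (k : ℕ) (c : ℝ) (f : ℝ → ℝ) : M k (fun t => c * f t) = |c| * M k f := by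
  simp only [M, unif, iteratedDeriv_const_mul_field, abs_mul,
    Real.mul_iSup_of_nonneg (abs_nonneg c)]

namespace MemL

variable {r : ℕ} {f : ℝ → ℝ}

lemma const_mul (hf : MemL r f) (c : ℝ) : MemL r fun t => c * f t := by
  obtain ⟨hcont, ⟨C, hC⟩, hdiff, K, hK⟩ := hf
  refine ⟨hcont.const_mul c, ⟨|c| * C, fun t => ?_⟩, contDiff_const.mul hdiff, ‖c‖₊ * K, ?_⟩
  · rw [abs_mul]
    exact mul_le_mul_of_nonneg_left (hC t) (abs_nonneg c)
  · have heq : iteratedDeriv (r - 1) (fun t => c * f t) = fun t => c • iteratedDeriv (r - 1) f t :=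
      funext fun t => iteratedDeriv_const_mul_field c f
    rw [heq]
    exact (lipschitzWith_smul c).comp hK

lemma abs_le_M_zero (hf : MemL r f) (t : ℝ) : |f t| ≤ M 0 f := by
  obtain ⟨-, ⟨C, hC⟩, -, -⟩ := hf
  rw [M, iteratedDeriv_zero]
  exact abs_le_unif hC t

lemma abs_iteratedDeriv_le_M (hf : MemL (r + 1) f) (t : ℝ) : |iteratedDeriv r f t| ≤ M r f := by
  obtain ⟨-, ⟨C, hC⟩, hdiff, K, hK⟩ := hf
  refine abs_le_unif (C := 2 ^ r * C + K * (2 ^ r - 1)) (fun s => ?_) t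
  obtain ⟨ξ, ⟨hsξ, hξs⟩, hξ⟩ := exists_abs_iteratedDeriv_le hC r hdiff s
  have hdist : |s - ξ| ≤ 2 ^ r - 1 := abs_le.2 ⟨by linarith, by linarith⟩
  calc |iteratedDeriv r f s|
      = |iteratedDeriv r f ξ + (iteratedDeriv r f s - iteratedDeriv r f ξ)| := by
        rw [add_sub_cancel]
    _ ≤ |iteratedDeriv r f ξ| + |iteratedDeriv r f s - iteratedDeriv r f ξ| := abs_add_le _ _
    _ ≤ 2 ^ r * C + K * (2 ^ r - 1) :=
        add_le_add hξ ((hK.dist_le_mul s ξ).trans (mul_le_mul_of_nonneg_left hdist K.2))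

lemma abs_iteratedDeriv_sub_le (hf : MemL (r + 1) f) (x y : ℝ) :
    |iteratedDeriv r f x - iteratedDeriv r f y| ≤ M (r + 1) f * |x - y| := by
  obtain ⟨-, -, -, K, hK⟩ := hf
  rw [M, iteratedDeriv_succ]
  exact abs_sub_le_unif_deriv_mul hK x y

lemma hasDerivAt_iteratedDeriv (hf : MemL (r + 1) f) {k : ℕ} (hk : k < r) (x : ℝ) :
    HasDerivAt (iteratedDeriv k f) (iteratedDeriv (k + 1) f x) x := by
  obtain ⟨-, -, hdiff, -⟩ := hf
  rw [iteratedDeriv_succ]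
  exact (hdiff.differentiable_iteratedDeriv k (by exact_mod_cast hk) x).hasDerivAt

end MemL

section Construction

variable {f f' f'' : ℝ → ℝ}

lemma iteratedDeriv_two_eq (hf : ∀ x, HasDerivAt f (f' x) x)
    (hf' : ∀ x, HasDerivAt f' (f'' x) x) : iteratedDeriv 2 f = f'' := by
  rw [iteratedDeriv_succ, iteratedDeriv_one, deriv_eq hf, deriv_eq hf']

lemma memL_three_of_hasDerivAt (hf : ∀ x, HasDerivAt f (f' x) x)
    (hf' : ∀ x, HasDerivAt f' (f'' x) x) {δ α : ℝ} (hδ : ∀ x, |f x| ≤ δ)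
    (hlip : ∀ x y, |f'' x - f'' y| ≤ α * |x - y|) : MemL 3 f := by
  have hLip : LipschitzWith α.toNNReal f'' := LipschitzWith.of_dist_le' hlip
  have hdiff : Differentiable ℝ f := fun x => (hf x).differentiableAt
  have hdiff' : Differentiable ℝ f' := fun x => (hf' x).differentiableAt
  have hC1 : ContDiff ℝ 1 f' :=
    contDiff_one_iff_deriv.2 ⟨hdiff', by rw [deriv_eq hf']; exact hLip.continuous⟩
  have hC2 : ContDiff ℝ (1 + 1) f :=
    contDiff_succ_iff_deriv.2 ⟨hdiff, by simp, by rwa [deriv_eq hf]⟩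
  refine ⟨hdiff.continuous, ⟨δ, hδ⟩, hC2.of_le (by norm_num), α.toNNReal, ?_⟩
  rwa [show 3 - 1 = 2 from rfl, iteratedDeriv_two_eq hf hf']

end Construction

/-! ### Comparison of central differences -/

section Comparison

variable {E : Type*} [NormedAddCommGroup E] [NormedSpace ℝ E]

lemma norm_le_of_norm_deriv_le {F F' : ℝ → E} {w w' : ℝ → ℝ} {t : ℝ}
    (hF : ∀ s, HasDerivAt F (F' s) s) (hF0 : F 0 = 0) (hw : ∀ s, HasDerivAt w (w' s) s)
    (hw0 : w 0 = 0) (hbound : ∀ s ∈ Set.Icc 0 t, ‖F' s‖ ≤ w' s) :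
    ∀ s ∈ Set.Icc 0 t, ‖F s‖ ≤ w s :=
  image_norm_le_of_norm_deriv_right_le_deriv_boundary
    (fun s _ => (hF s).continuousAt.continuousWithinAt) (fun s _ => (hF s).hasDerivWithinAt)
    (by rw [hF0, hw0, norm_zero]) hw fun s hs => hbound s ⟨hs.1, hs.2.le⟩

lemma norm_centralDiff_sub_smul_deriv_le {f f' f'' : ℝ → E} (hf : ∀ x, HasDerivAt f (f' x) x)
    (hf' : ∀ x, HasDerivAt f' (f'' x) x) {w w' w'' : ℝ → ℝ} (hw : ∀ s, HasDerivAt w (w' s) s)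
    (hw' : ∀ s, HasDerivAt w' (w'' s) s) (hw0 : w 0 = 0) (hw'0 : w' 0 = 0) {x t : ℝ} (ht : 0 ≤ t)
    (hbound : ∀ s ∈ Set.Icc 0 t, ‖f'' (x + s) - f'' (x - s)‖ ≤ w'' s) :
    ‖f (x + t) - f (x - t) - (2 * t) • f' x‖ ≤ w t := by
  have hd' (s : ℝ) : HasDerivAt (fun s => f' (x + s) + f' (x - s) - (2 : ℝ) • f' x)
      (f'' (x + s) - f'' (x - s)) s := by
    rw [sub_eq_add_neg (f'' (x + s))]
    exact (((hf' (x + s)).comp_const_add x s).add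
      ((hf' (x - s)).comp_const_sub x s)).sub_const ((2 : ℝ) • f' x)
  have hd (s : ℝ) : HasDerivAt (fun s => f (x + s) - f (x - s) - (2 * s) • f' x)
      (f' (x + s) + f' (x - s) - (2 : ℝ) • f' x) s := by
    refine ((((hf (x + s)).comp_const_add x s).sub ((hf (x - s)).comp_const_sub x s)).sub
      (((hasDerivAt_id s).const_mul (2 : ℝ)).smul_const (f' x))).congr_deriv ?_
    rw [sub_neg_eq_add, mul_one]
  exact norm_le_of_norm_deriv_le hd (by simp) hw hw0
    (norm_le_of_norm_deriv_le hd' (by simp [two_smul]) hw' hw'0 hbound) t ⟨ht, le_rfl⟩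

end Comparison

lemma hasDerivAt_pow_succ_mul_abs (n : ℕ) (x : ℝ) :
    HasDerivAt (fun x : ℝ => x ^ (n + 1) * |x|) ((n + 2) * (x ^ n * |x|)) x := by
  refine hasDerivAt_of_hasDerivAt_of_ne' (x := 0) (g := fun x : ℝ => (n + 2) * (x ^ n * |x|))
    (fun y hy => ?_) (by fun_prop) (by fun_prop) x
  refine ((hasDerivAt_pow (n + 1) y).mul (hasDerivAt_abs hy)).congr_deriv ?_
  have hsign : y * (SignType.sign y : ℝ) = |y| := self_mul_sign y
  rw [pow_succ, mul_assoc (y ^ n), hsign, Nat.add_sub_cancel]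
  push_cast
  ring

/-- The odd saturated ramp: `t` clamped to `[-b, b]` (for `0 ≤ b`). Writing it with absolute values
gives its iterated antiderivatives `rampPrimitive` and `rampPrimitive₂` in closed form. -/
noncomputable def ramp (b t : ℝ) : ℝ := (|t + b| - |t - b|) / 2

/-- The antiderivative of `ramp b` that vanishes at `0` (for `0 ≤ b`). -/
noncomputable def rampPrimitive (b t : ℝ) : ℝ :=
  ((t + b) * |t + b| - (t - b) * |t - b|) / 4 - b ^ 2 / 2

/-- The antiderivative of `rampPrimitive b` that vanishes at `0`. -/
noncomputable def rampPrimitive₂ (b t : ℝ) : ℝ :=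
  ((t + b) ^ 2 * |t + b| - (t - b) ^ 2 * |t - b|) / 12 - b ^ 2 / 2 * t

section Ramp

variable {a b t : ℝ}

lemma hasDerivAt_rampPrimitive (b t : ℝ) : HasDerivAt (rampPrimitive b) (ramp b t) t := by
  have hadd := (hasDerivAt_pow_succ_mul_abs 0 (t + b)).comp_add_const t b
  have hsub := (hasDerivAt_pow_succ_mul_abs 0 (t - b)).comp_sub_const t b
  simp only [zero_add, pow_one] at hadd hsub
  refine (((hadd.sub hsub).div_const 4).sub_const (b ^ 2 / 2)).congr_deriv ?_
  rw [ramp]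
  push_cast
  ring

lemma hasDerivAt_rampPrimitive₂ (b t : ℝ) :
    HasDerivAt (rampPrimitive₂ b) (rampPrimitive b t) t := by
  have hadd := (hasDerivAt_pow_succ_mul_abs 1 (t + b)).comp_add_const t b
  have hsub := (hasDerivAt_pow_succ_mul_abs 1 (t - b)).comp_sub_const t b
  refine (((hadd.sub hsub).div_const 12).sub
    ((hasDerivAt_id t).const_mul (b ^ 2 / 2))).congr_deriv ?_
  rw [rampPrimitive]
  push_cast
  ring

lemma ramp_eq_min (hb : 0 ≤ b) (ht : 0 ≤ t) : ramp b t = min t b := by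
  rw [ramp, abs_of_nonneg (add_nonneg ht hb)]
  rcases le_total t b with h | h
  · rw [min_eq_left h, abs_of_nonpos (sub_nonpos.2 h)]
    ring
  · rw [min_eq_right h, abs_of_nonneg (sub_nonneg.2 h)]
    ring

lemma abs_ramp_le (hb : 0 ≤ b) (t : ℝ) : |ramp b t| ≤ b := by
  have h := abs_abs_sub_abs_le (t + b) (t - b)
  rw [add_sub_sub_cancel, ← two_mul, abs_of_nonneg (by positivity : 0 ≤ 2 * b)] at h
  rw [ramp, abs_div, abs_two]
  linarith

lemma abs_ramp_sub_le (b s t : ℝ) : |ramp b s - ramp b t| ≤ |s - t| := by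
  have hadd := abs_abs_sub_abs_le (s + b) (t + b)
  have hsub := abs_abs_sub_abs_le (s - b) (t - b)
  rw [add_sub_add_right_eq_sub] at hadd
  rw [sub_sub_sub_cancel_right] at hsub
  rw [ramp, ramp, abs_le]
  constructor <;> linarith [abs_le.1 hadd, abs_le.1 hsub]

lemma rampPrimitive_zero (hb : 0 ≤ b) : rampPrimitive b 0 = 0 := by
  rw [rampPrimitive, zero_add, zero_sub, abs_neg, abs_of_nonneg hb]
  ring

lemma rampPrimitive₂_zero (b : ℝ) : rampPrimitive₂ b 0 = 0 := by
  rw [rampPrimitive₂, zero_add, zero_sub, abs_neg]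
  ring

lemma rampPrimitive_neg (b t : ℝ) : rampPrimitive b (-t) = rampPrimitive b t := by
  rw [rampPrimitive, rampPrimitive, neg_add_eq_sub, ← neg_sub t b, ← neg_add', abs_neg, abs_neg]
  ring

lemma rampPrimitive₂_neg (b t : ℝ) : rampPrimitive₂ b (-t) = -rampPrimitive₂ b t := by
  rw [rampPrimitive₂, rampPrimitive₂, neg_add_eq_sub, ← neg_sub t b, ← neg_add', abs_neg, abs_neg]
  ring

lemma rampPrimitive_add_self (ha : 0 ≤ a) (hb : 0 ≤ b) :
    rampPrimitive b (a + b) = a * b + b ^ 2 / 2 := by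
  rw [rampPrimitive, add_sub_cancel_right, abs_of_nonneg ha,
    abs_of_nonneg (by positivity : 0 ≤ a + b + b)]
  ring

lemma rampPrimitive₂_add_self (ha : 0 ≤ a) (hb : 0 ≤ b) :
    rampPrimitive₂ b (a + b) = a ^ 2 * b / 2 + a * b ^ 2 / 2 + b ^ 3 / 6 := by
  rw [rampPrimitive₂, add_sub_cancel_right, abs_of_nonneg ha,
    abs_of_nonneg (by positivity : 0 ≤ a + b + b)]
  ring

lemma rampPrimitive_le_of_abs_le {L : ℝ} (hb : 0 ≤ b) (ht : |t| ≤ L) :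
    rampPrimitive b t ≤ rampPrimitive b L := by
  have hmono : MonotoneOn (rampPrimitive b) (Set.Ici 0) := by
    refine monotoneOn_of_hasDerivWithinAt_nonneg (convex_Ici 0)
      (fun x _ => (hasDerivAt_rampPrimitive b x).continuousAt.continuousWithinAt)
      (fun x _ => (hasDerivAt_rampPrimitive b x).hasDerivWithinAt) fun x hx => ?_
    have hx0 : 0 ≤ x := interior_subset hx
    rw [ramp_eq_min hb hx0]
    exact le_min hx0 hb
  calc rampPrimitive b t = rampPrimitive b |t| := by
        rcases abs_choice t with h | h <;> simp only [h, rampPrimitive_neg]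
    _ ≤ rampPrimitive b L := hmono (abs_nonneg t) ((abs_nonneg t).trans ht) ht

end Ramp

section LandauKolmogorov

variable {f f' f'' : ℝ → ℝ} {α a b : ℝ}

lemma abs_deriv_mul_le_add (hf : ∀ x, HasDerivAt f (f' x) x)
    (hf' : ∀ x, HasDerivAt f' (f'' x) x) {w w' w'' : ℝ → ℝ} (hw : ∀ s, HasDerivAt w (w' s) s)
    (hw' : ∀ s, HasDerivAt w' (w'' s) s) (hw0 : w 0 = 0) (hw'0 : w' 0 = 0) {δ x t : ℝ}
    (ht : 0 ≤ t) (hδ : ∀ x, |f x| ≤ δ)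
    (hbound : ∀ s ∈ Set.Icc 0 t, |f'' (x + s) - f'' (x - s)| ≤ 2 * w'' s) :
    |f' x| * t ≤ δ + w t := by
  have hcentral := norm_centralDiff_sub_smul_deriv_le hf hf' (fun s => (hw s).const_mul 2)
    (fun s => (hw' s).const_mul 2) (by rw [hw0, mul_zero]) (by rw [hw'0, mul_zero]) ht hbound
  rw [Real.norm_eq_abs, smul_eq_mul] at hcentral
  have hmul : |f' x| * t = |f' x * t| := by rw [abs_mul, abs_of_nonneg ht]
  rw [hmul, abs_le]
  constructor <;>
    linarith [abs_le.1 hcentral, abs_le.1 (hδ (x + t)), abs_le.1 (hδ (x - t))]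

lemma abs_centralDiff_le (hlip : ∀ x y, |f'' x - f'' y| ≤ α * |x - y|) {s : ℝ} (hs : 0 ≤ s)
    (x : ℝ) : |f'' (x + s) - f'' (x - s)| ≤ 2 * (α * s) := by
  have h := hlip (x + s) (x - s)
  rw [add_sub_sub_cancel, ← two_mul, abs_of_nonneg (by positivity : 0 ≤ 2 * s)] at h
  linarith

lemma abs_deriv_le_of_lipschitz (hf : ∀ x, HasDerivAt f (f' x) x)
    (hf' : ∀ x, HasDerivAt f' (f'' x) x) (hb : 0 < b) (hδ : ∀ x, |f x| ≤ α * (b ^ 3 / 3))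
    (hlip : ∀ x y, |f'' x - f'' y| ≤ α * |x - y|) (x : ℝ) : |f' x| ≤ α * (b ^ 2 / 2) := by
  have hw' (s : ℝ) : HasDerivAt (fun s => α * (s ^ 2 / 2)) (α * s) s := by
    simpa using ((hasDerivAt_pow 2 s).div_const 2).const_mul α
  have hw (s : ℝ) : HasDerivAt (fun s => α * (s ^ 3 / 6)) (α * (s ^ 2 / 2)) s := by
    refine (((hasDerivAt_pow 3 s).div_const 6).const_mul α).congr_deriv ?_
    push_cast
    ring
  have h := abs_deriv_mul_le_add hf hf' hw hw' (by simp) (by simp) hb.le hδ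
    fun s hs => abs_centralDiff_le hlip hs.1 x
  refine le_of_mul_le_mul_right (h.trans_eq ?_) hb
  ring

lemma abs_deriv_le_of_bounded_of_lipschitz (hf : ∀ x, HasDerivAt f (f' x) x)
    (hf' : ∀ x, HasDerivAt f' (f'' x) x) (hα : 0 ≤ α) (ha : 0 ≤ a) (hb : 0 < b)
    (hδ : ∀ x, |f x| ≤ α * (a ^ 2 * b / 2 + a * b ^ 2 + b ^ 3 / 3))
    (hbound : ∀ x, |f'' x| ≤ α * b) (hlip : ∀ x y, |f'' x - f'' y| ≤ α * |x - y|) (x : ℝ) :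
    |f' x| ≤ α * (a * b + b ^ 2 / 2) := by
  have hdiff : ∀ s ∈ Set.Icc 0 (a + b), |f'' (x + s) - f'' (x - s)| ≤ 2 * (α * ramp b s) := by
    intro s hs
    rw [ramp_eq_min hb.le hs.1, mul_min_of_nonneg _ _ hα, mul_min_of_nonneg _ _ zero_le_two]
    refine le_min (abs_centralDiff_le hlip hs.1 x) ?_
    linarith [abs_sub (f'' (x + s)) (f'' (x - s)), hbound (x + s), hbound (x - s)]
  have h := abs_deriv_mul_le_add hf hf' (fun s => (hasDerivAt_rampPrimitive₂ b s).const_mul α)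
    (fun s => (hasDerivAt_rampPrimitive b s).const_mul α) (by rw [rampPrimitive₂_zero, mul_zero])
    (by rw [rampPrimitive_zero hb.le, mul_zero]) (by positivity) hδ hdiff
  rw [rampPrimitive₂_add_self ha hb.le] at h
  refine le_of_mul_le_mul_right (h.trans_eq ?_) (by positivity : 0 < a + b)
  ring

end LandauKolmogorov

namespace MemL

variable {f : ℝ → ℝ} {α a b : ℝ}

lemma M_one_le_of_M_three_le (hf : MemL 3 f) (hb : 0 < b) (h₀ : M 0 f ≤ α * (b ^ 3 / 3))
    (h₃ : M 3 f ≤ α) : M 1 f ≤ α * (b ^ 2 / 2) :=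
  unif_le <| abs_deriv_le_of_lipschitz
    (by simpa using hf.hasDerivAt_iteratedDeriv (k := 0) two_pos)
    (hf.hasDerivAt_iteratedDeriv one_lt_two) hb (fun x => (hf.abs_le_M_zero x).trans h₀)
    fun x y => (hf.abs_iteratedDeriv_sub_le x y).trans
      (mul_le_mul_of_nonneg_right h₃ (abs_nonneg _))

lemma M_one_le_of_M_two_le_of_M_three_le (hf : MemL 3 f) (hα : 0 ≤ α) (ha : 0 ≤ a) (hb : 0 < b)
    (h₀ : M 0 f ≤ α * (a ^ 2 * b / 2 + a * b ^ 2 + b ^ 3 / 3)) (h₂ : M 2 f ≤ α * b)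
    (h₃ : M 3 f ≤ α) : M 1 f ≤ α * (a * b + b ^ 2 / 2) :=
  unif_le <| abs_deriv_le_of_bounded_of_lipschitz
    (by simpa using hf.hasDerivAt_iteratedDeriv (k := 0) two_pos)
    (hf.hasDerivAt_iteratedDeriv one_lt_two) hα ha hb (fun x => (hf.abs_le_M_zero x).trans h₀)
    (fun x => (hf.abs_iteratedDeriv_le_M x).trans h₂)
    fun x y => (hf.abs_iteratedDeriv_sub_le x y).trans
      (mul_le_mul_of_nonneg_right h₃ (abs_nonneg _))

end MemL

/-! ### The extremal spline -/

lemma sub_eq_sub_of_hasDerivAt_eqOn {E : Type*} [NormedAddCommGroup E] [NormedSpace ℝ E]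
    {F F' G G' : ℝ → E} {u v : ℝ} (hF : ∀ x, HasDerivAt F (F' x) x)
    (hG : ∀ x, HasDerivAt G (G' x) x) (h : Set.EqOn F' G' (Set.uIcc u v)) :
    F v - F u = G v - G u := by
  have hle : ‖F v - G v - (F u - G u)‖ ≤ 0 * ‖v - u‖ :=
    (convex_uIcc u v).norm_image_sub_le_of_norm_hasDerivWithin_le
      (fun x _ => ((hF x).sub (hG x)).hasDerivWithinAt)
      (fun x hx => by rw [h hx, sub_self, norm_zero]) Set.left_mem_uIcc Set.right_mem_uIcc
  rw [zero_mul, norm_le_zero_iff, sub_sub_sub_comm] at hle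
  exact sub_eq_zero.1 hle

section Reflection

variable {E : Type*} [NormedAddCommGroup E] [NormedSpace ℝ E] {f f' : ℝ → E} {c : ℝ}

lemma reflect_eq_neg_of_hasDerivAt (hf : ∀ x, HasDerivAt f (f' x) x)
    (hf' : ∀ x, f' (c - x) = f' x) (hc : f (c / 2) = 0) (x : ℝ) : f (c - x) = -f x := by
  have hd (x : ℝ) : HasDerivAt (fun x => f (c - x) + f x) 0 x :=
    (((hf (c - x)).comp_const_sub c x).add (hf x)).congr_deriv (by rw [hf', neg_add_cancel])
  have hconst : f (c - x) + f x = f (c - c / 2) + f (c / 2) := is_const_of_deriv_eq_zero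
    (fun x => (hd x).differentiableAt) (fun x => (hd x).deriv) x (c / 2)
  rw [sub_half, hc, add_zero] at hconst
  exact eq_neg_of_add_eq_zero_left hconst

lemma reflect_eq_of_hasDerivAt (hf : ∀ x, HasDerivAt f (f' x) x)
    (hf' : ∀ x, f' (c - x) = -f' x) (x : ℝ) : f (c - x) = f x := by
  have hd (x : ℝ) : HasDerivAt (fun x => f (c - x) - f x) 0 x :=
    (((hf (c - x)).comp_const_sub c x).sub (hf x)).congr_deriv (by rw [hf', neg_neg, sub_self])
  have hconst : f (c - x) - f x = f (c - c / 2) - f (c / 2) := is_const_of_deriv_eq_zero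
    (fun x => (hd x).differentiableAt) (fun x => (hd x).deriv) x (c / 2)
  rw [sub_half, sub_self] at hconst
  exact sub_eq_zero.1 hconst

end Reflection

lemma exists_mem_Icc_eq_of_reflect {β : Type*} {f : ℝ → β} {L : ℝ} (hL : 0 < L)
    (hright : ∀ t, f (2 * L - t) = f t) (hleft : ∀ t, f (-(2 * L) - t) = f t) (t : ℝ) :
    ∃ s ∈ Set.Icc (-L) L, f t = f s := by
  have hperiodic : Function.Periodic f (4 * L) := fun x => by
    rw [← hleft x, ← hright (-(2 * L) - x)]
    congr 1
    ring
  obtain ⟨s, ⟨hs, hs'⟩, hts⟩ := hperiodic.exists_mem_Ico (by positivity) t (-L)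
  rcases le_total s L with hsL | hsL
  · exact ⟨s, ⟨hs, hsL⟩, hts⟩
  · exact ⟨2 * L - s, ⟨by linarith, by linarith⟩, by rw [hts, hright]⟩

/-- The `4L`-periodic triangle wave of slope `±1` that is the identity on `[-L, L]`: the distance
from `-L` on the circle of length `4L`, shifted down by `L`. -/
noncomputable def triangleWave (L t : ℝ) : ℝ := ‖((t + L : ℝ) : AddCircle (4 * L))‖ - L

section TriangleWave

variable {L t : ℝ}

lemma triangleWave_of_mem_Icc (hL : 0 < L) (ht : t ∈ Set.Icc (-L) L) : triangleWave L t = t := by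
  have hnonneg : 0 ≤ t + L := by linarith [ht.1]
  have hnorm : ‖((t + L : ℝ) : AddCircle (4 * L))‖ = |t + L| := by
    rw [AddCircle.norm_coe_eq_abs_iff _ (by positivity), abs_of_nonneg hnonneg,
      abs_of_pos (by positivity)]
    linarith [ht.2]
  rw [triangleWave, hnorm, abs_of_nonneg hnonneg, add_sub_cancel_right]

lemma triangleWave_neg_two_mul_sub (L t : ℝ) :
    triangleWave L (-(2 * L) - t) = triangleWave L t := by
  rw [triangleWave, triangleWave, show -(2 * L) - t + L = -(t + L) by ring, AddCircle.coe_neg,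
    norm_neg]

lemma triangleWave_two_mul_sub (L t : ℝ) : triangleWave L (2 * L - t) = triangleWave L t := by
  rw [triangleWave, triangleWave, show 2 * L - t + L = -(t + L) + 4 * L by ring,
    AddCircle.coe_add_period, AddCircle.coe_neg, norm_neg]

lemma abs_triangleWave_sub_le (L s t : ℝ) : |triangleWave L s - triangleWave L t| ≤ |s - t| := by
  rw [triangleWave, triangleWave, sub_sub_sub_cancel_right]
  calc |‖((s + L : ℝ) : AddCircle (4 * L))‖ - ‖((t + L : ℝ) : AddCircle (4 * L))‖|
      ≤ ‖((s + L : ℝ) : AddCircle (4 * L)) - ((t + L : ℝ) : AddCircle (4 * L))‖ :=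
        abs_norm_sub_norm_le _ _
    _ = ‖((s - t : ℝ) : AddCircle (4 * L))‖ := by
        rw [← AddCircle.coe_sub, add_sub_add_right_eq_sub]
    _ ≤ |s - t| := QuotientAddGroup.norm_mk_le_norm

end TriangleWave

/-- The second derivative of `rodovSpline a b`. -/
noncomputable def rodovSplineSnd (a b t : ℝ) : ℝ := -ramp b (triangleWave (a + b) t)

/-- The first derivative of `rodovSpline a b`; the constant makes it vanish at `±(a + b)`. -/
noncomputable def rodovSplineFst (a b t : ℝ) : ℝ :=
  a * b + b ^ 2 / 2 + ∫ x in (0 : ℝ)..t, rodovSplineSnd a b x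

/-- The extremal spline `t ↦ -ψ₃(a, b, 0; t + a + b)`, translated so that its derivative is largest
at `0`, and built by integrating twice from its explicit second derivative. -/
noncomputable def rodovSpline (a b t : ℝ) : ℝ := ∫ x in (0 : ℝ)..t, rodovSplineFst a b x

section RodovSpline

variable {a b t : ℝ}

lemma abs_rodovSplineSnd_le (hb : 0 ≤ b) (a t : ℝ) : |rodovSplineSnd a b t| ≤ b := by
  rw [rodovSplineSnd, abs_neg]
  exact abs_ramp_le hb _

lemma abs_rodovSplineSnd_sub_le (a b x y : ℝ) :
    |rodovSplineSnd a b x - rodovSplineSnd a b y| ≤ |x - y| := by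
  rw [rodovSplineSnd, rodovSplineSnd, neg_sub_neg, abs_sub_comm]
  exact (abs_ramp_sub_le b _ _).trans (abs_triangleWave_sub_le _ x y)

lemma hasDerivAt_rodovSplineFst (a b x : ℝ) :
    HasDerivAt (rodovSplineFst a b) (rodovSplineSnd a b x) x := by
  have hLip : LipschitzWith 1 (rodovSplineSnd a b) :=
    LipschitzWith.of_dist_le_mul fun x y => by
      simpa [Real.dist_eq] using abs_rodovSplineSnd_sub_le a b x y
  exact (hLip.continuous.integral_hasStrictDerivAt 0 x).hasDerivAt.const_add _

lemma hasDerivAt_rodovSpline (a b x : ℝ) :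
    HasDerivAt (rodovSpline a b) (rodovSplineFst a b x) x := by
  have hcont : Continuous (rodovSplineFst a b) :=
    continuous_iff_continuousAt.2 fun x => (hasDerivAt_rodovSplineFst a b x).continuousAt
  exact (hcont.integral_hasStrictDerivAt 0 x).hasDerivAt

lemma rodovSplineFst_zero (a b : ℝ) : rodovSplineFst a b 0 = a * b + b ^ 2 / 2 := by
  rw [rodovSplineFst, intervalIntegral.integral_same, add_zero]

lemma rodovSpline_zero (a b : ℝ) : rodovSpline a b 0 = 0 :=
  intervalIntegral.integral_same

lemma uIcc_zero_subset_Icc {L : ℝ} (ht : t ∈ Set.Icc (-L) L) :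
    Set.uIcc 0 t ⊆ Set.Icc (-L) L :=
  Set.uIcc_subset_Icc ⟨by linarith [ht.1, ht.2], by linarith [ht.1, ht.2]⟩ ht

lemma rodovSplineFst_of_mem_Icc (ha : 0 ≤ a) (hb : 0 < b)
    (ht : t ∈ Set.Icc (-(a + b)) (a + b)) :
    rodovSplineFst a b t = a * b + b ^ 2 / 2 - rampPrimitive b t := by
  have h := sub_eq_sub_of_hasDerivAt_eqOn (u := 0) (v := t) (hasDerivAt_rodovSplineFst a b)
    (fun x => (hasDerivAt_rampPrimitive b x).neg) fun x hx => by
      rw [rodovSplineSnd, triangleWave_of_mem_Icc (by positivity) (uIcc_zero_subset_Icc ht hx)]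
  simp only [Pi.neg_apply, rodovSplineFst_zero, rampPrimitive_zero hb.le] at h
  linarith

lemma rodovSpline_of_mem_Icc (ha : 0 ≤ a) (hb : 0 < b)
    (ht : t ∈ Set.Icc (-(a + b)) (a + b)) :
    rodovSpline a b t = (a * b + b ^ 2 / 2) * t - rampPrimitive₂ b t := by
  have h := sub_eq_sub_of_hasDerivAt_eqOn (u := 0) (v := t) (hasDerivAt_rodovSpline a b)
    (fun x => ((hasDerivAt_id x).const_mul (a * b + b ^ 2 / 2)).sub
      (hasDerivAt_rampPrimitive₂ b x)) fun x hx => by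
      rw [rodovSplineFst_of_mem_Icc ha hb (uIcc_zero_subset_Icc ht hx), mul_one]
  simpa [rodovSpline_zero, rampPrimitive₂_zero] using h

lemma rodovSplineFst_add (ha : 0 ≤ a) (hb : 0 < b) : rodovSplineFst a b (a + b) = 0 := by
  rw [rodovSplineFst_of_mem_Icc ha hb ⟨by linarith, le_rfl⟩, rampPrimitive_add_self ha hb.le,
    sub_self]

lemma rodovSplineFst_neg_add (ha : 0 ≤ a) (hb : 0 < b) : rodovSplineFst a b (-(a + b)) = 0 := by
  rw [rodovSplineFst_of_mem_Icc ha hb ⟨le_rfl, by linarith⟩, rampPrimitive_neg,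
    rampPrimitive_add_self ha hb.le, sub_self]

lemma rodovSpline_add (ha : 0 ≤ a) (hb : 0 < b) :
    rodovSpline a b (a + b) = a ^ 2 * b / 2 + a * b ^ 2 + b ^ 3 / 3 := by
  rw [rodovSpline_of_mem_Icc ha hb ⟨by linarith, le_rfl⟩, rampPrimitive₂_add_self ha hb.le]
  ring

lemma rodovSpline_neg_add (ha : 0 ≤ a) (hb : 0 < b) :
    rodovSpline a b (-(a + b)) = -(a ^ 2 * b / 2 + a * b ^ 2 + b ^ 3 / 3) := by
  rw [rodovSpline_of_mem_Icc ha hb ⟨le_rfl, by linarith⟩, rampPrimitive₂_neg,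
    rampPrimitive₂_add_self ha hb.le]
  ring

lemma monotoneOn_rodovSpline (ha : 0 ≤ a) (hb : 0 < b) :
    MonotoneOn (rodovSpline a b) (Set.Icc (-(a + b)) (a + b)) := by
  refine monotoneOn_of_hasDerivWithinAt_nonneg (convex_Icc _ _)
    (fun x _ => (hasDerivAt_rodovSpline a b x).continuousAt.continuousWithinAt)
    (fun x _ => (hasDerivAt_rodovSpline a b x).hasDerivWithinAt) fun x hx => ?_
  have hx := interior_subset hx
  rw [rodovSplineFst_of_mem_Icc ha hb hx, sub_nonneg, ← rampPrimitive_add_self ha hb.le]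
  exact rampPrimitive_le_of_abs_le hb.le (abs_le.2 hx)

lemma rodovSpline_reflect {c : ℝ}
    (hc : ∀ t, triangleWave (a + b) (c - t) = triangleWave (a + b) t)
    (hc0 : rodovSplineFst a b (c / 2) = 0) (t : ℝ) : rodovSpline a b (c - t) = rodovSpline a b t :=
  reflect_eq_of_hasDerivAt (hasDerivAt_rodovSpline a b)
    (reflect_eq_neg_of_hasDerivAt (hasDerivAt_rodovSplineFst a b)
      (fun x => by rw [rodovSplineSnd, hc, rodovSplineSnd]) hc0) t

lemma abs_rodovSpline_le (ha : 0 ≤ a) (hb : 0 < b) (t : ℝ) :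
    |rodovSpline a b t| ≤ a ^ 2 * b / 2 + a * b ^ 2 + b ^ 3 / 3 := by
  have hright := rodovSpline_reflect (triangleWave_two_mul_sub (a + b))
    (by rw [mul_div_cancel_left₀ _ two_ne_zero, rodovSplineFst_add ha hb])
  have hleft := rodovSpline_reflect (triangleWave_neg_two_mul_sub (a + b))
    (by rw [neg_div, mul_div_cancel_left₀ _ two_ne_zero, rodovSplineFst_neg_add ha hb])
  obtain ⟨s, hs, hts⟩ := exists_mem_Icc_eq_of_reflect (by positivity) hright hleft t
  have hab : -(a + b) ≤ a + b := hs.1.trans hs.2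
  rw [hts, abs_le, ← rodovSpline_neg_add ha hb, ← rodovSpline_add ha hb]
  exact ⟨monotoneOn_rodovSpline ha hb ⟨le_rfl, hab⟩ hs hs.1,
    monotoneOn_rodovSpline ha hb hs ⟨hab, le_rfl⟩ hs.2⟩

lemma abs_rodovSplineFst_le (ha : 0 ≤ a) (hb : 0 < b) (t : ℝ) :
    |rodovSplineFst a b t| ≤ a * b + b ^ 2 / 2 := by
  simpa using abs_deriv_le_of_bounded_of_lipschitz (α := 1) (hasDerivAt_rodovSpline a b)
    (hasDerivAt_rodovSplineFst a b) zero_le_one ha hb (by simpa using abs_rodovSpline_le ha hb)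
    (by simpa using abs_rodovSplineSnd_le hb.le a) (by simpa using abs_rodovSplineSnd_sub_le a b) t

lemma memL_three_rodovSpline (ha : 0 ≤ a) (hb : 0 < b) : MemL 3 (rodovSpline a b) :=
  memL_three_of_hasDerivAt (α := 1) (hasDerivAt_rodovSpline a b) (hasDerivAt_rodovSplineFst a b)
    (abs_rodovSpline_le ha hb) (by simpa using abs_rodovSplineSnd_sub_le a b)

lemma M_zero_rodovSpline_le (ha : 0 ≤ a) (hb : 0 < b) :
    M 0 (rodovSpline a b) ≤ a ^ 2 * b / 2 + a * b ^ 2 + b ^ 3 / 3 := by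
  rw [M, iteratedDeriv_zero]
  exact unif_le (abs_rodovSpline_le ha hb)

lemma le_M_one_rodovSpline (ha : 0 ≤ a) (hb : 0 < b) :
    a * b + b ^ 2 / 2 ≤ M 1 (rodovSpline a b) := by
  rw [M, iteratedDeriv_one, deriv_eq (hasDerivAt_rodovSpline a b), ← rodovSplineFst_zero]
  exact (le_abs_self _).trans (abs_le_unif (abs_rodovSplineFst_le ha hb) 0)

lemma M_two_rodovSpline_le (a : ℝ) (hb : 0 ≤ b) : M 2 (rodovSpline a b) ≤ b := by
  rw [M, iteratedDeriv_two_eq (hasDerivAt_rodovSpline a b) (hasDerivAt_rodovSplineFst a b)]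
  exact unif_le (abs_rodovSplineSnd_le hb a)

lemma M_three_rodovSpline_le (a b : ℝ) : M 3 (rodovSpline a b) ≤ 1 := by
  rw [M, iteratedDeriv_succ,
    iteratedDeriv_two_eq (hasDerivAt_rodovSpline a b) (hasDerivAt_rodovSplineFst a b)]
  exact unif_deriv_le zero_le_one (by simpa using abs_rodovSplineSnd_sub_le a b)

end RodovSpline

/-! ### The extremal problem -/

/-- The parameters `(α, a, b)` over which the extremal problem on the right-hand side ranges: those
for which `α • rodovSpline a b` has uniform norm `δ` and lies on the boundary of the class `X`. -/
structure IsAdmissible (η δ α a b : ℝ) : Prop where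
  α_pos : 0 < α
  b_pos : 0 < b
  a_nonneg : 0 ≤ a
  height_eq : α * (a ^ 2 * b / 2 + a * b ^ 2 + b ^ 3 / 3) = δ
  class_eq : α * b ^ (1 - η) = 1

/-- The slope `α (a b + b² / 2)` of an admissible triple as a function of `b` alone, obtained by
substituting `α b = b ^ η` and solving the quadratic equation for `a`. -/
noncomputable def admissibleSlope (η δ b : ℝ) : ℝ :=
  √(2 * b ^ η * δ + (b ^ η * b) ^ 2 / 3) - b ^ η * b / 2

lemma continuous_admissibleSlope {η : ℝ} (hη : 0 ≤ η) (δ : ℝ) :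
    Continuous (admissibleSlope η δ) := by
  have := Real.continuous_rpow_const hη
  unfold admissibleSlope
  fun_prop

lemma admissibleSlope_zero {η : ℝ} (hη : η ≠ 0) (δ : ℝ) : admissibleSlope η δ 0 = 0 := by
  simp [admissibleSlope, Real.zero_rpow hη]

lemma exists_pos_rpow_eq {y z : ℝ} (hy : 0 < y) (hz : z ≠ 0) : ∃ x : ℝ, 0 < x ∧ x ^ z = y :=
  ⟨y ^ z⁻¹, Real.rpow_pos_of_pos hy _, Real.rpow_inv_rpow hy.le hz⟩

lemma mul_rpow_one_sub_mul_rpow {α b : ℝ} (hα : 0 < α) (hb : 0 ≤ b) (η : ℝ) :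
    (α * b) ^ (1 - η) * α ^ η = α * b ^ (1 - η) := by
  have hpow : α ^ (1 - η) * α ^ η = α := by rw [← Real.rpow_add hα, sub_add_cancel, Real.rpow_one]
  rw [Real.mul_rpow hα.le hb, mul_right_comm, hpow]

lemma rpow_sub_one_mul_cube {b : ℝ} (hb : 0 < b) (η : ℝ) : b ^ (η - 1) * b ^ 3 = b ^ (η + 2) := by
  rw [← Real.rpow_add_natCast hb.ne']
  norm_num [sub_add_eq_add_sub, add_sub_assoc]

lemma exists_height_eq {α b δ : ℝ} (hα : 0 < α) (hb : 0 < b) (h : α * b ^ 3 ≤ 3 * δ) :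
    ∃ a, 0 ≤ a ∧ α * (a ^ 2 * b / 2 + a * b ^ 2 + b ^ 3 / 3) = δ := by
  have hcube : 0 < α * b ^ 3 := by positivity
  have hδ : 0 ≤ δ := by linarith
  have hle : b ^ 2 ≤ 2 * δ / (α * b) + b ^ 2 / 3 := by
    have : 2 * b ^ 2 / 3 ≤ 2 * δ / (α * b) := by
      rw [le_div_iff₀ (by positivity)]
      linarith
    linarith
  have hsq : √(2 * δ / (α * b) + b ^ 2 / 3) ^ 2 = 2 * δ / (α * b) + b ^ 2 / 3 :=
    Real.sq_sqrt (by positivity)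
  refine ⟨√(2 * δ / (α * b) + b ^ 2 / 3) - b, sub_nonneg.2 (Real.le_sqrt_of_sq_le hle), ?_⟩
  calc _ = α * b * (√(2 * δ / (α * b) + b ^ 2 / 3) ^ 2 / 2 - b ^ 2 / 6) := by ring
    _ = δ := by rw [hsq]; field_simp; ring

lemma exists_isAdmissible {η δ b : ℝ} (hb : 0 < b) (h : b ^ (η + 2) ≤ 3 * δ) :
    ∃ a, IsAdmissible η δ (b ^ (η - 1)) a b := by
  have hα : 0 < b ^ (η - 1) := Real.rpow_pos_of_pos hb _
  obtain ⟨a, ha, hheight⟩ := exists_height_eq hα hb ((rpow_sub_one_mul_cube hb η).trans_le h)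
  exact ⟨a, hα, hb, ha, hheight, by rw [← Real.rpow_add hb]; simp⟩

namespace IsAdmissible

variable {η δ α a b : ℝ}

lemma mul_eq_rpow (h : IsAdmissible η δ α a b) : α * b = b ^ η := by
  calc α * b = α * (b ^ (1 - η) * b ^ η) := by
        rw [← Real.rpow_add h.b_pos, sub_add_cancel, Real.rpow_one]
    _ = b ^ η := by rw [← mul_assoc, h.class_eq, one_mul]

lemma rpow_le_three_mul (h : IsAdmissible η δ α a b) : b ^ (η + 2) ≤ 3 * δ := by
  have hα := h.α_pos
  have hb := h.b_pos
  have ha := h.a_nonneg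
  have hrest : 0 ≤ α * (a ^ 2 * b / 2 + a * b ^ 2) := by positivity
  have hcube : b ^ (η + 2) = α * b ^ 3 := by
    rw [Real.rpow_add hb, Real.rpow_two, ← h.mul_eq_rpow]
    ring
  linarith [h.height_eq]

lemma slope_eq (h : IsAdmissible η δ α a b) :
    α * (a * b + b ^ 2 / 2) = admissibleSlope η δ b := by
  have hα := h.α_pos
  have hb := h.b_pos
  have ha := h.a_nonneg
  have hsq : 2 * (α * b) * δ + (α * b * b) ^ 2 / 3 = (α * b * (a + b)) ^ 2 := by
    rw [← h.height_eq]
    ring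
  rw [admissibleSlope, ← h.mul_eq_rpow, hsq, Real.sqrt_sq (by positivity)]
  ring

lemma admissibleSlope_pos (h : IsAdmissible η δ α a b) : 0 < admissibleSlope η δ b := by
  have hα := h.α_pos
  have hb := h.b_pos
  have ha := h.a_nonneg
  rw [← h.slope_eq]
  positivity

lemma le_mul_of_rpow_mul_rpow_le_one {m : ℝ} (h : IsAdmissible η δ α a b) (hη : η < 1)
    (hm : 0 ≤ m) (hprod : m ^ (1 - η) * α ^ η ≤ 1) : m ≤ α * b := by
  have hα := h.α_pos
  have hb := h.b_pos
  have hprod' : m ^ (1 - η) * α ^ η ≤ (α * b) ^ (1 - η) * α ^ η := by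
    rwa [mul_rpow_one_sub_mul_rpow hα hb.le, h.class_eq]
  exact (Real.rpow_le_rpow_iff hm (by positivity) (sub_pos.2 hη)).1
    (le_of_mul_le_mul_right hprod' (Real.rpow_pos_of_pos hα η))

end IsAdmissible

lemma exists_isAdmissible_forall_slope_le {η δ : ℝ} (hη : 0 < η) (hδ : 0 < δ) :
    ∃ α a b, IsAdmissible η δ α a b ∧ ∀ α' a' b', IsAdmissible η δ α' a' b' →
      α' * (a' * b' + b' ^ 2 / 2) ≤ α * (a * b + b ^ 2 / 2) := by
  obtain ⟨B, hB, hBpow⟩ := exists_pos_rpow_eq (by positivity : 0 < 3 * δ)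
    (by positivity : η + 2 ≠ 0)
  obtain ⟨b, ⟨hb, hbB⟩, hmax⟩ := isCompact_Icc.exists_isMaxOn (Set.nonempty_Icc.2 hB.le)
    (continuous_admissibleSlope hη.le δ).continuousOn
  have hb : 0 < b := by
    refine hb.lt_of_ne fun hb0 => ?_
    obtain ⟨a, h⟩ := exists_isAdmissible hB hBpow.le
    have hle : admissibleSlope η δ B ≤ admissibleSlope η δ b := hmax ⟨hB.le, le_rfl⟩
    rw [← hb0, admissibleSlope_zero hη.ne'] at hle
    exact h.admissibleSlope_pos.not_ge hle
  obtain ⟨a, h⟩ := exists_isAdmissible hb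
    ((Real.rpow_le_rpow hb.le hbB (by positivity)).trans_eq hBpow)
  refine ⟨_, a, b, h, fun α' a' b' h' => ?_⟩
  rw [h.slope_eq, h'.slope_eq]
  refine hmax ⟨h'.b_pos.le, ?_⟩
  exact (Real.rpow_le_rpow_iff h'.b_pos.le hB.le (by positivity)).1
    (h'.rpow_le_three_mul.trans_eq hBpow.symm)

lemma exists_isAdmissible_M_one_le {η δ : ℝ} (hη₀ : 0 ≤ η) (hη₁ : η < 1) (hδ : 0 < δ)
    {f : ℝ → ℝ} (hf : MemL 3 f) (hprod : M 2 f ^ (1 - η) * M 3 f ^ η ≤ 1) (hfδ : M 0 f ≤ δ) :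
    ∃ α a b, IsAdmissible η δ α a b ∧ M 1 f ≤ α * (a * b + b ^ 2 / 2) := by
  obtain ⟨B, hB, hBpow⟩ := exists_pos_rpow_eq (by positivity : 0 < 3 * δ)
    (by positivity : η + 2 ≠ 0)
  rcases le_or_gt (M 3 f) (B ^ (η - 1)) with hM | hM
  · obtain ⟨a, h⟩ := exists_isAdmissible hB hBpow.le
    have hα := h.α_pos
    have haB : 0 ≤ a * B := mul_nonneg h.a_nonneg hB.le
    have hδB : δ = B ^ (η - 1) * (B ^ 3 / 3) := by linarith [rpow_sub_one_mul_cube hB η]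
    refine ⟨_, a, B, h, (hf.M_one_le_of_M_three_le hB (hfδ.trans_eq hδB) hM).trans ?_⟩
    exact mul_le_mul_of_nonneg_left (le_add_of_nonneg_left haB) hα.le
  · obtain ⟨b, hb, hbpow⟩ := exists_pos_rpow_eq ((Real.rpow_pos_of_pos hB _).trans hM)
      (sub_ne_zero.2 hη₁.ne)
    have hbB : b ≤ B := by
      rw [← hbpow] at hM
      exact (Real.rpow_le_rpow_iff_of_neg hB hb (sub_neg.2 hη₁)).1 hM.le
    obtain ⟨a, h⟩ := exists_isAdmissible hb
      ((Real.rpow_le_rpow hb.le hbB (by positivity)).trans_eq hBpow)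
    rw [hbpow] at h
    have hM₂ : M 2 f ≤ M 3 f * b := h.le_mul_of_rpow_mul_rpow_le_one hη₁ (unif_nonneg _) hprod
    exact ⟨_, a, b, h, hf.M_one_le_of_M_two_le_of_M_three_le h.α_pos.le h.a_nonneg hb
      (hfδ.trans_eq h.height_eq.symm) hM₂ le_rfl⟩

lemma IsAdmissible.exists_slope_le_M_one {η δ α a b : ℝ} (hη : η ∈ Set.Icc (0 : ℝ) 1)
    (h : IsAdmissible η δ α a b) :
    ∃ f, (MemL 3 f ∧ M 2 f ^ (1 - η) * M 3 f ^ η ≤ 1) ∧ M 0 f ≤ δ ∧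
      α * (a * b + b ^ 2 / 2) ≤ M 1 f := by
  have hα := h.α_pos
  have ha := h.a_nonneg
  have hb := h.b_pos
  refine ⟨fun t => α * rodovSpline a b t, ⟨(memL_three_rodovSpline ha hb).const_mul α, ?_⟩, ?_, ?_⟩
    <;> simp only [M_const_mul, abs_of_pos hα]
  · have hM₂ := mul_le_mul_of_nonneg_left (M_two_rodovSpline_le a hb.le) hα.le
    have hM₃ := mul_le_of_le_one_right hα.le (M_three_rodovSpline_le a b)
    have hnonneg (k : ℕ) : 0 ≤ α * M k (rodovSpline a b) := mul_nonneg hα.le (unif_nonneg _)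
    calc (α * M 2 (rodovSpline a b)) ^ (1 - η) * (α * M 3 (rodovSpline a b)) ^ η
        ≤ (α * b) ^ (1 - η) * α ^ η :=
          mul_le_mul (Real.rpow_le_rpow (hnonneg 2) hM₂ (sub_nonneg.2 hη.2))
            (Real.rpow_le_rpow (hnonneg 3) hM₃ hη.1) (Real.rpow_nonneg (hnonneg 3) _)
            (by positivity)
      _ = α * b ^ (1 - η) := mul_rpow_one_sub_mul_rpow hα hb.le η
      _ = 1 := h.class_eq
  · rw [← h.height_eq]
    exact mul_le_mul_of_nonneg_left (M_zero_rodovSpline_le ha hb) hα.le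
  · exact mul_le_mul_of_nonneg_left (le_M_one_rodovSpline ha hb) hα.le

/-- For `η ∈ (0,1)` and `X = {f ∈ L³_{∞,∞} : M_2(f)^{1-η} M_3(f)^η ≤ 1}`, the modulus
of continuity `ω(D¹, X; δ)` equals the value of the extremal problem
`sup {α(ab + b²/2) : α, b > 0, a ≥ 0, α(a²b/2 + ab² + b³/3) = δ, α b^{1-η} = 1}`,
and this supremum is attained. -/
theorem stmt17 (η : ℝ) (hη : η ∈ Set.Ioo (0:ℝ) 1) (δ : ℝ) (hδ : 0 < δ)
    (X : Set (ℝ → ℝ))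
    (hX : X = {f : ℝ → ℝ | MemL 3 f ∧ (M 2 f) ^ (1 - η) * (M 3 f) ^ η ≤ 1})
    (S : Set ℝ)
    (hS : S = {y : ℝ | ∃ α a b : ℝ, 0 < α ∧ 0 < b ∧ 0 ≤ a ∧
      α * (a ^ 2 * b / 2 + a * b ^ 2 + b ^ 3 / 3) = δ ∧ α * b ^ (1 - η) = 1 ∧
      y = α * (a * b + b ^ 2 / 2)}) :
    omegaMod 1 X δ = sSup S ∧ sSup S ∈ S := by
  subst hX hS
  constructor
  · refine csSup_eq_csSup_of_forall_exists_le ?_ ?_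
    · rintro _ ⟨f, ⟨hf, hprod⟩, hfδ, rfl⟩
      obtain ⟨α, a, b, h, hle⟩ := exists_isAdmissible_M_one_le hη.1.le hη.2 hδ hf hprod hfδ
      exact ⟨_, ⟨α, a, b, h.α_pos, h.b_pos, h.a_nonneg, h.height_eq, h.class_eq, rfl⟩, hle⟩
    · rintro _ ⟨α, a, b, hα, hb, ha, hheight, hclass, rfl⟩
      obtain ⟨f, hfX, hfδ, hle⟩ := IsAdmissible.exists_slope_le_M_one
        (Set.Ioo_subset_Icc_self hη) ⟨hα, hb, ha, hheight, hclass⟩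
      exact ⟨_, ⟨f, hfX, hfδ, rfl⟩, hle⟩
  · obtain ⟨α, a, b, h, hmax⟩ := exists_isAdmissible_forall_slope_le hη.1 hδ
    refine IsGreatest.csSup_mem (a := α * (a * b + b ^ 2 / 2))
      ⟨⟨α, a, b, h.α_pos, h.b_pos, h.a_nonneg, h.height_eq, h.class_eq, rfl⟩, ?_⟩
    rintro _ ⟨α', a', b', hα', hb', ha', hheight', hclass', rfl⟩
    exact hmax α' a' b' ⟨hα', hb', ha', hheight', hclass'⟩
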